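/- Let λ > 0, let ψ ∈ P^r satisfy Γ_λ(ψ) = L(1), and define e(t) = exp(−λ(t−t₀)) − ψ(t). Then for all w, v ∈ P^r with Γ_λ(v) = w, the L∞–L¹ stability estimate sup_{t∈I} |v(t)| ≤ (sup_{t∈I} |e(t)/e(t₀)| + 1) · ∫_I |w(t)| dt holds. -/

import Mathlib

open Polynomial MeasureTheory intervalIntegral

/-- The rescaled Legendre polynomials on `[t₀, t₁]`: `K i` has degree `i`,
`K i (t₁) = 1`, `K i (t₀) = (-1)^i`, and they are `L²(t₀,t₁)`-orthogonal with
`∫ K i ^ 2 = (t₁ - t₀)/(2 i + 1)`. -/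
def IsLegendreBasis (t₀ t₁ : ℝ) (K : ℕ → Polynomial ℝ) : Prop :=
  (∀ i, (K i).natDegree = i) ∧ (∀ i, (K i).eval t₁ = 1) ∧
  (∀ i, (K i).eval t₀ = (-1 : ℝ) ^ i) ∧
  (∀ i j, (∫ t in t₀..t₁, (K i).eval t * (K j).eval t) =
    if i = j then (t₁ - t₀) / (2 * (i : ℝ) + 1) else 0)

/-- The lifting operator `L(z) = (z/k) ∑_{i=0}^r (-1)^i (2i+1) K_i`. -/
noncomputable def Lop (t₀ t₁ : ℝ) (r : ℕ) (K : ℕ → Polynomial ℝ) (z : ℝ) : Polynomial ℝ :=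
  Polynomial.C (z / (t₁ - t₀)) *
    ∑ i ∈ Finset.range (r + 1), Polynomial.C ((-1 : ℝ) ^ i * (2 * (i : ℝ) + 1)) * K i

/-- The endpoint lifting operator `L̂(z) = (z/k) ∑_{i=0}^r (2i+1) K_i`. -/
noncomputable def LopE (t₀ t₁ : ℝ) (r : ℕ) (K : ℕ → Polynomial ℝ) (z : ℝ) : Polynomial ℝ :=
  Polynomial.C (z / (t₁ - t₀)) *
    ∑ i ∈ Finset.range (r + 1), Polynomial.C (2 * (i : ℝ) + 1) * K i

/-- The scalar dG operator `Γ_λ(v) = v' + L(v(t₀)) + λ v`. -/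
noncomputable def Gam (t₀ t₁ : ℝ) (r : ℕ) (K : ℕ → Polynomial ℝ) (lam : ℝ)
    (v : Polynomial ℝ) : Polynomial ℝ :=
  Polynomial.derivative v + Lop t₀ t₁ r K (v.eval t₀) + Polynomial.C lam * v

/-- The dG error function `e(t) = exp(-λ (t - t₀)) - ψ(t)`. -/
noncomputable def errF (t₀ lam : ℝ) (ψ : Polynomial ℝ) (t : ℝ) : ℝ :=
  Real.exp (-lam * (t - t₀)) - ψ.eval t

/-!
Subtracting `v(t₀) e / e(t₀)` from `v` leaves a function `u` with `u(t₀) = 0` and `u' + λ u = w`,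
since `e' + λ e = -e(t₀) L(1)`; hence `|u| ≤ ∫ |w|`, and everything reduces to
`|v(t₀)| ≤ ∫ |w|`. For this, test `Γ_λ(v) = w` with the solution `V` of the adjoint problem, for
which `∫ w V = (V(t₀) + λ k) v(t₀)`. The Legendre coefficients of `V` alternate in sign, by the
recurrence `K_{n+2}' = K_n' + (2(2n+3)/k) K_{n+1}`, so `|K_n| ≤ 1` gives `|V| ≤ V(t₀)`.
-/

lemma le_biSup_of_bddAbove_image {α : Type*} {f : α → ℝ} {s : Set α} (hf : BddAbove (f '' s))
    {a : α} (ha : a ∈ s) : f a ≤ ⨆ x ∈ s, f x := by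
  obtain ⟨M, hM⟩ := hf
  have hbdd : BddAbove (Set.range fun x => ⨆ _ : x ∈ s, f x) := by
    refine ⟨max M 0, ?_⟩
    rintro _ ⟨x, rfl⟩
    exact Real.iSup_le (fun hx => le_max_of_le_left (hM (Set.mem_image_of_mem f hx)))
      (le_max_right M 0)
  exact (ciSup_pos (f := fun _ => f a) ha).ge.trans (le_ciSup hbdd a)

lemma le_max_of_hasDerivAt_sub_mul {f g : ℝ → ℝ} {c : ℝ}
    (hf : ∀ x, HasDerivAt f ((x - c) * g x) x) (hg : ∀ x, 0 ≤ g x) {a b t : ℝ}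
    (ht : t ∈ Set.Icc a b) : f t ≤ max (f a) (f b) := by
  have hcont : Continuous f := continuous_iff_continuousAt.mpr fun x => (hf x).continuousAt
  have hdiff : Differentiable ℝ f := fun x => (hf x).differentiableAt
  rcases le_total t c with htc | hct
  · have hanti : AntitoneOn f (Set.Iic c) := by
      refine antitoneOn_of_deriv_nonpos (convex_Iic c) hcont.continuousOn hdiff.differentiableOn
        fun x hx => ?_
      rw [interior_Iic] at hx
      rw [(hf x).deriv]
      exact mul_nonpos_of_nonpos_of_nonneg (sub_nonpos.mpr hx.le) (hg x)
    exact le_max_of_le_left (hanti (ht.1.trans htc) htc ht.1)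
  · have hmono : MonotoneOn f (Set.Ici c) := by
      refine monotoneOn_of_deriv_nonneg (convex_Ici c) hcont.continuousOn hdiff.differentiableOn
        fun x hx => ?_
      rw [interior_Ici] at hx
      rw [(hf x).deriv]
      exact mul_nonneg (sub_nonneg.mpr hx.le) (hg x)
    exact le_max_of_le_right (hmono hct (hct.trans ht.2) ht.2)

lemma abs_integral_mul_le_mul_integral_abs {f g : ℝ → ℝ} {a b M : ℝ} (hab : a ≤ b)
    (hg : ∀ s ∈ Set.Icc a b, |g s| ≤ M) (hf : IntervalIntegrable f volume a b) :
    |∫ s in a..b, g s * f s| ≤ M * ∫ s in a..b, |f s| := by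
  rw [← intervalIntegral.integral_const_mul, ← Real.norm_eq_abs]
  refine norm_integral_le_of_norm_le hab (Filter.Eventually.of_forall fun s hs => ?_)
    (hf.abs.const_mul M)
  rw [norm_mul]
  exact mul_le_mul_of_nonneg_right (hg s (Set.Ioc_subset_Icc_self hs)) (norm_nonneg _)

/-- Variation of constants: `u(t) = exp(-c (t - a)) u(a) + ∫ exp(-c (t - s)) g(s) ds`, where both
exponentials are at most `1`. -/
lemma abs_le_add_integral_abs_of_hasDerivAt {u g : ℝ → ℝ} {c : ℝ} (hc : 0 ≤ c)
    (hg : Continuous g) (hu : ∀ s, HasDerivAt u (g s - c * u s) s) {a t : ℝ} (hat : a ≤ t) :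
    |u t| ≤ |u a| + ∫ s in a..t, |g s| := by
  have hexp_le : ∀ s ∈ Set.Icc a t, |Real.exp (c * (s - t))| ≤ 1 := fun s hs => by
    rw [Real.abs_exp, Real.exp_le_one_iff]
    exact mul_nonpos_of_nonneg_of_nonpos hc (sub_nonpos.mpr hs.2)
  have hderiv : ∀ s, HasDerivAt (fun s => Real.exp (c * (s - t)) * u s)
      (Real.exp (c * (s - t)) * g s) s := fun s => by
    have hexp := (((hasDerivAt_id s).sub_const t).const_mul c).exp
    exact (hexp.mul (hu s)).congr_deriv (by simp only [id]; ring)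
  have hduhamel : u t = Real.exp (c * (a - t)) * u a +
      ∫ s in a..t, Real.exp (c * (s - t)) * g s := by
    have hcont : Continuous fun s => Real.exp (c * (s - t)) * g s := by fun_prop
    rw [integral_eq_sub_of_hasDerivAt (fun s _ => hderiv s) (hcont.intervalIntegrable a t)]
    simp
  calc |u t| ≤ |Real.exp (c * (a - t)) * u a| + |∫ s in a..t, Real.exp (c * (s - t)) * g s| := by
        rw [hduhamel]
        exact abs_add_le _ _
    _ ≤ 1 * |u a| + 1 * ∫ s in a..t, |g s| := by
        rw [abs_mul]
        gcongr
        · exact hexp_le a ⟨le_rfl, hat⟩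
        · exact abs_integral_mul_le_mul_integral_abs hat hexp_le (hg.intervalIntegrable a t)
    _ = |u a| + ∫ s in a..t, |g s| := by simp only [one_mul]

section PolyIntegral

/-- Integration of polynomials over `[a, b]`, as a linear functional; `polyIntegral a b (p * q)` is
the `L²` inner product of `p` and `q`. -/
noncomputable def polyIntegral (a b : ℝ) : ℝ[X] →ₗ[ℝ] ℝ where
  toFun p := ∫ t in a..b, p.eval t
  map_add' p q := by
    simp only [eval_add]
    exact integral_add (p.continuous.intervalIntegrable a b) (q.continuous.intervalIntegrable a b)
  map_smul' c p := by simp [eval_smul]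

variable {a b : ℝ}

lemma polyIntegral_apply (p : ℝ[X]) : polyIntegral a b p = ∫ t in a..b, p.eval t := rfl

lemma polyIntegral_C_mul (c : ℝ) (p : ℝ[X]) :
    polyIntegral a b (C c * p) = c * polyIntegral a b p := by
  rw [← smul_eq_C_mul, map_smul, smul_eq_mul]

lemma polyIntegral_derivative (p : ℝ[X]) :
    polyIntegral a b (derivative p) = p.eval b - p.eval a :=
  integral_eq_sub_of_hasDerivAt (fun x _ => p.hasDerivAt x)
    ((derivative p).continuous.intervalIntegrable a b)

lemma polyIntegral_derivative_mul (p q : ℝ[X]) :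
    polyIntegral a b (derivative p * q) =
      p.eval b * q.eval b - p.eval a * q.eval a - polyIntegral a b (p * derivative q) := by
  have h := polyIntegral_derivative (a := a) (b := b) (p * q)
  rw [derivative_mul, map_add, eval_mul, eval_mul] at h
  linarith

lemma polyIntegral_sturmLiouville_symm {w : ℝ[X]} (ha : w.eval a = 0) (hb : w.eval b = 0)
    (p q : ℝ[X]) :
    polyIntegral a b (derivative (w * derivative p) * q) =
      polyIntegral a b (p * derivative (w * derivative q)) := by
  have hparts (p q : ℝ[X]) : polyIntegral a b (derivative (w * derivative p) * q) =
      -polyIntegral a b (w * derivative p * derivative q) := by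
    rw [polyIntegral_derivative_mul, eval_mul, eval_mul, ha, hb]
    ring
  rw [hparts, mul_comm p, hparts, mul_right_comm]

lemma eq_zero_of_polyIntegral_mul_self (hab : a < b) {p : ℝ[X]}
    (hp : polyIntegral a b (p * p) = 0) : p = 0 := by
  refine p.eq_zero_of_infinite_isRoot ((Set.Icc_infinite hab).mono fun x hx => ?_)
  by_contra hpx
  refine (intervalIntegral.integral_pos hab (p * p).continuousOn (fun y _ => ?_)
    ⟨x, hx, ?_⟩).ne' hp
  · rw [eval_mul]
    exact mul_self_nonneg _
  · rw [eval_mul]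
    exact mul_self_pos.mpr hpx

end PolyIntegral

namespace IsLegendreBasis

variable {t₀ t₁ : ℝ} {K : ℕ → ℝ[X]}

lemma natDegree_eq (hK : IsLegendreBasis t₀ t₁ K) (i : ℕ) : (K i).natDegree = i := hK.1 i

lemma eval_right (hK : IsLegendreBasis t₀ t₁ K) (i : ℕ) : (K i).eval t₁ = 1 := hK.2.1 i

lemma eval_left (hK : IsLegendreBasis t₀ t₁ K) (i : ℕ) : (K i).eval t₀ = (-1) ^ i := hK.2.2.1 i

lemma polyIntegral_mul (hK : IsLegendreBasis t₀ t₁ K) (i j : ℕ) :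
    polyIntegral t₀ t₁ (K i * K j) = if i = j then (t₁ - t₀) / (2 * (i : ℝ) + 1) else 0 := by
  simp only [polyIntegral_apply, eval_mul]
  exact hK.2.2.2 i j

lemma ne_zero (hK : IsLegendreBasis t₀ t₁ K) (i : ℕ) : K i ≠ 0 := by
  intro h
  simpa [h] using hK.eval_right i

lemma zero_eq_one (hK : IsLegendreBasis t₀ t₁ K) : K 0 = 1 := by
  have hC := eq_C_of_natDegree_eq_zero (hK.natDegree_eq 0)
  have hone := hK.eval_right 0
  rw [hC, eval_C] at hone
  rw [hC, hone, C_1]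

lemma linearMap_ext (hK : IsLegendreBasis t₀ t₁ K) {M : Type*} [AddCommMonoid M] [Module ℝ M]
    {f g : ℝ[X] →ₗ[ℝ] M} {p : ℝ[X]} (h : ∀ i ≤ p.natDegree, f (K i) = g (K i)) : f p = g p := by
  let S : Polynomial.Sequence ℝ :=
    ⟨K, fun i => by rw [degree_eq_natDegree (hK.ne_zero i), hK.natDegree_eq]⟩
  have hspan : Submodule.span ℝ (K '' Set.Iic p.natDegree) = degreeLE ℝ p.natDegree :=
    S.span_degreeLE fun i _ => (leadingCoeff_ne_zero.mpr (hK.ne_zero i)).isUnit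
  refine LinearMap.eqOn_span (s := K '' Set.Iic p.natDegree) ?_
    (hspan ▸ mem_degreeLE.mpr degree_le_natDegree)
  rintro _ ⟨i, hi, rfl⟩
  exact h i hi

lemma polyIntegral_mul_eq_zero_of_orthogonal (hK : IsLegendreBasis t₀ t₁ K) {p q : ℝ[X]}
    (h : ∀ i ≤ q.natDegree, polyIntegral t₀ t₁ (p * K i) = 0) : polyIntegral t₀ t₁ (p * q) = 0 :=
  hK.linearMap_ext (f := polyIntegral t₀ t₁ ∘ₗ LinearMap.mulLeft ℝ p) (g := 0) h

lemma polyIntegral_mul_eq_zero_of_natDegree_lt (hK : IsLegendreBasis t₀ t₁ K) {n : ℕ} {p : ℝ[X]}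
    (hp : p.natDegree < n) : polyIntegral t₀ t₁ (K n * p) = 0 :=
  hK.polyIntegral_mul_eq_zero_of_orthogonal fun i hi => by
    rw [hK.polyIntegral_mul, if_neg (hi.trans_lt hp).ne']

lemma eq_C_mul_of_orthogonal (hK : IsLegendreBasis t₀ t₁ K) (ht : t₀ < t₁) {n : ℕ} {p : ℝ[X]}
    (hp : p.natDegree ≤ n) (h : ∀ j < n, polyIntegral t₀ t₁ (p * K j) = 0) :
    p = C ((2 * n + 1) / (t₁ - t₀) * polyIntegral t₀ t₁ (p * K n)) * K n := by
  set c := (2 * n + 1) / (t₁ - t₀) * polyIntegral t₀ t₁ (p * K n) with hc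
  have hdeg : (p - C c * K n).natDegree ≤ n :=
    (natDegree_sub_le_of_le hp ((natDegree_C_mul_le _ _).trans (hK.natDegree_eq n).le)).trans_eq
      (max_self n)
  refine sub_eq_zero.mp (eq_zero_of_polyIntegral_mul_self ht
    (hK.polyIntegral_mul_eq_zero_of_orthogonal fun j hj => ?_))
  rw [sub_mul, map_sub, mul_assoc, polyIntegral_C_mul, hK.polyIntegral_mul]
  rcases (hj.trans hdeg).lt_or_eq with hjn | rfl
  · rw [h j hjn, if_neg hjn.ne', mul_zero, sub_zero]
  · have hk := (sub_pos.mpr ht).ne'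
    rw [if_pos rfl, hc]
    field_simp
    ring

lemma polyIntegral_sum_mul (hK : IsLegendreBasis t₀ t₁ K) (c : ℕ → ℝ) {n j : ℕ} (hj : j < n) :
    polyIntegral t₀ t₁ ((∑ i ∈ Finset.range n, C (c i) * K i) * K j) =
      c j * ((t₁ - t₀) / (2 * (j : ℝ) + 1)) := by
  rw [Finset.sum_mul, map_sum, Finset.sum_eq_single_of_mem j (Finset.mem_range.mpr hj)]
  · rw [mul_assoc, polyIntegral_C_mul, hK.polyIntegral_mul, if_pos rfl]
  · intro i _ hij
    rw [mul_assoc, polyIntegral_C_mul, hK.polyIntegral_mul, if_neg hij, mul_zero]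

lemma natDegree_derivative_le (hK : IsLegendreBasis t₀ t₁ K) (n : ℕ) :
    (derivative (K n)).natDegree ≤ n - 1 := by
  simpa only [hK.natDegree_eq] using Polynomial.natDegree_derivative_le (K n)

lemma polyIntegral_mul_derivative_of_le (hK : IsLegendreBasis t₀ t₁ K) {i j : ℕ} (h : j ≤ i) :
    polyIntegral t₀ t₁ (K i * derivative (K j)) = 0 := by
  rcases eq_or_ne j 0 with rfl | hj
  · simp [hK.zero_eq_one]
  · have hdeg := hK.natDegree_derivative_le j
    exact hK.polyIntegral_mul_eq_zero_of_natDegree_lt (by lia)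

lemma polyIntegral_derivative_succ_mul (hK : IsLegendreBasis t₀ t₁ K) (n : ℕ) :
    polyIntegral t₀ t₁ (derivative (K (n + 1)) * K n) = 2 := by
  rw [polyIntegral_derivative_mul, hK.polyIntegral_mul_derivative_of_le n.le_succ, hK.eval_right,
    hK.eval_right, hK.eval_left, hK.eval_left, ← pow_add, (by ring : n + 1 + n = 2 * n + 1),
    pow_succ, pow_mul]
  norm_num

lemma derivative_one (hK : IsLegendreBasis t₀ t₁ K) (ht : t₀ < t₁) :
    derivative (K 1) = C (2 / (t₁ - t₀)) := by
  rw [hK.eq_C_mul_of_orthogonal ht (hK.natDegree_derivative_le 1) (by simp),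
    hK.polyIntegral_derivative_succ_mul 0, hK.zero_eq_one, mul_one]
  congr 1
  push_cast
  ring

lemma derivative_add_two (hK : IsLegendreBasis t₀ t₁ K) (ht : t₀ < t₁) (n : ℕ) :
    derivative (K (n + 2)) =
      derivative (K n) + C (2 * (2 * n + 3) / (t₁ - t₀)) * K (n + 1) := by
  have hdeg : (derivative (K (n + 2)) - derivative (K n)).natDegree ≤ n + 1 :=
    (natDegree_sub_le_of_le (hK.natDegree_derivative_le (n + 2))
      (hK.natDegree_derivative_le n)).trans (by lia)
  -- `K (n + 2) - K n` vanishes at both endpoints.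
  have hparts (j : ℕ) : polyIntegral t₀ t₁ ((derivative (K (n + 2)) - derivative (K n)) * K j) =
      polyIntegral t₀ t₁ (K n * derivative (K j)) -
        polyIntegral t₀ t₁ (K (n + 2) * derivative (K j)) := by
    simp only [sub_mul, map_sub, polyIntegral_derivative_mul, hK.eval_right, hK.eval_left, pow_add]
    ring
  have horth : ∀ j < n + 1,
      polyIntegral t₀ t₁ ((derivative (K (n + 2)) - derivative (K n)) * K j) = 0 := fun j hj => by
    rw [hparts, hK.polyIntegral_mul_derivative_of_le (by lia),
      hK.polyIntegral_mul_derivative_of_le (by lia), sub_zero]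
  rw [← sub_eq_iff_eq_add', hK.eq_C_mul_of_orthogonal ht hdeg horth, hparts, mul_comm (K n),
    hK.polyIntegral_derivative_succ_mul, hK.polyIntegral_mul_derivative_of_le (by lia)]
  congr 2
  push_cast
  ring

lemma eval_right_derivative (hK : IsLegendreBasis t₀ t₁ K) (ht : t₀ < t₁) :
    ∀ n : ℕ, (derivative (K n)).eval t₁ = n * (n + 1) / (t₁ - t₀)
  | 0 => by simp [hK.zero_eq_one]
  | 1 => by
    rw [hK.derivative_one ht, eval_C]
    norm_num
  | n + 2 => by
    rw [hK.derivative_add_two ht, eval_add, eval_mul, eval_C, hK.eval_right,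
      hK.eval_right_derivative ht n]
    push_cast
    ring

lemma differential_equation (hK : IsLegendreBasis t₀ t₁ K) (ht : t₀ < t₁) (n : ℕ) :
    derivative ((X - C t₀) * (C t₁ - X) * derivative (K n)) = -C (n * (n + 1) : ℝ) * K n := by
  set w : ℝ[X] := (X - C t₀) * (C t₁ - X) with hw
  have hw_left : w.eval t₀ = 0 := by simp [hw]
  have hw_right : w.eval t₁ = 0 := by simp [hw]
  have hdeg (j : ℕ) : (derivative (w * derivative (K j))).natDegree ≤ j := by
    rcases eq_or_ne j 0 with rfl | hj
    · simp [hK.zero_eq_one]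
    · have hw_deg : w.natDegree ≤ 2 := by
        rw [hw]
        compute_degree
      have hmul := natDegree_mul_le_of_le hw_deg (hK.natDegree_derivative_le j)
      have hder := Polynomial.natDegree_derivative_le (w * derivative (K j))
      lia
  have horth : ∀ j < n, polyIntegral t₀ t₁ (derivative (w * derivative (K n)) * K j) = 0 :=
    fun j hj => by
      rw [polyIntegral_sturmLiouville_symm hw_left hw_right]
      exact hK.polyIntegral_mul_eq_zero_of_natDegree_lt ((hdeg j).trans_lt hj)
  obtain ⟨c, hc⟩ : ∃ c : ℝ, derivative (w * derivative (K n)) = C c * K n :=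
    ⟨_, hK.eq_C_mul_of_orthogonal ht (hdeg n) horth⟩
  have hc_eq : c = -(n * (n + 1)) := by
    have hright := congrArg (eval t₁) hc
    have hk := (sub_pos.mpr ht).ne'
    have hw_deriv : (derivative w).eval t₁ = -(t₁ - t₀) := by simp [hw]
    rw [derivative_mul, eval_add, eval_mul, eval_mul, hw_right, eval_mul, eval_C, hK.eval_right,
      hK.eval_right_derivative ht, hw_deriv, neg_mul, mul_div_cancel₀ _ hk] at hright
    linarith
  rw [hc, hc_eq, C_neg]

/-- Sonin's function `n (n + 1) K_n² + (t - t₀) (t₁ - t) K_n'²` decreases up to the midpoint and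
increases after it. -/
lemma abs_eval_le_one (hK : IsLegendreBasis t₀ t₁ K) (ht : t₀ < t₁) (n : ℕ) {t : ℝ}
    (hmem : t ∈ Set.Icc t₀ t₁) : |(K n).eval t| ≤ 1 := by
  rcases eq_or_ne n 0 with rfl | hn
  · simp [hK.zero_eq_one]
  set N : ℝ := n * (n + 1) with hN
  have hN_pos : 0 < N := by positivity
  set F : ℝ[X] := C N * K n ^ 2 + (X - C t₀) * (C t₁ - X) * derivative (K n) ^ 2 with hF
  have hF_eval (x : ℝ) : F.eval x =
      N * (K n).eval x ^ 2 + (x - t₀) * (t₁ - x) * (derivative (K n)).eval x ^ 2 := by simp [hF]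
  have hF_deriv (x : ℝ) : HasDerivAt (fun x => F.eval x)
      ((x - (t₀ + t₁) / 2) * (2 * (derivative (K n)).eval x ^ 2)) x := by
    refine (F.hasDerivAt x).congr_deriv ?_
    have hode := congrArg (eval x) (hK.differential_equation ht n)
    simp only [derivative_mul, derivative_sub, derivative_X, derivative_C, eval_add, eval_mul,
      eval_sub, eval_X, eval_C, eval_one, eval_zero, eval_neg, ← hN] at hode
    simp only [hF, derivative_add, derivative_mul, derivative_sub, derivative_X, derivative_C,
      derivative_pow, eval_add, eval_mul, eval_sub, eval_X, eval_C, eval_one, eval_zero, eval_pow]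
    push_cast
    linear_combination 2 * (derivative (K n)).eval x * hode
  have hF_left : F.eval t₀ = N := by
    simp [hF_eval, hK.eval_left, ← pow_mul, mul_comm n 2]
  have hF_right : F.eval t₁ = N := by simp [hF_eval, hK.eval_right]
  have hF_le : F.eval t ≤ N := by
    simpa only [hF_left, hF_right, max_self] using
      le_max_of_hasDerivAt_sub_mul hF_deriv (fun x => by positivity) hmem
  have hrest : 0 ≤ (t - t₀) * (t₁ - t) * (derivative (K n)).eval t ^ 2 :=
    mul_nonneg (mul_nonneg (sub_nonneg.mpr hmem.1) (sub_nonneg.mpr hmem.2)) (sq_nonneg _)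
  rw [← sq_le_one_iff_abs_le_one]
  refine le_of_mul_le_mul_left ?_ hN_pos
  linarith [hF_eval t]

lemma polyIntegral_Lop_mul (hK : IsLegendreBasis t₀ t₁ K) (ht : t₀ < t₁) {r : ℕ} (z : ℝ)
    {p : ℝ[X]} (hp : p.natDegree ≤ r) :
    polyIntegral t₀ t₁ (Lop t₀ t₁ r K z * p) = z * p.eval t₀ := by
  refine hK.linearMap_ext (f := polyIntegral t₀ t₁ ∘ₗ LinearMap.mulLeft ℝ (Lop t₀ t₁ r K z))
    (g := z • leval t₀) fun j hj => ?_
  have hk := (sub_pos.mpr ht).ne'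
  simp only [LinearMap.comp_apply, LinearMap.mulLeft_apply, LinearMap.smul_apply, leval_apply,
    smul_eq_mul, hK.eval_left]
  rw [Lop, mul_assoc, polyIntegral_C_mul, hK.polyIntegral_sum_mul _ (by lia)]
  field_simp

end IsLegendreBasis

/-- For `m > 0`, the absolute values of the Legendre coefficients of `dualPoly`, divided by
`2 i + 1`. The recurrence comes from `IsLegendreBasis.derivative_add_two`, with
`m = λ (t₁ - t₀)`. -/
noncomputable def dualCoeff (m : ℝ) : ℕ → ℝ
  | 0 => 1
  | 1 => 1 + 2 / m
  | j + 2 => dualCoeff m j + 2 * (2 * (j : ℝ) + 3) / m * dualCoeff m (j + 1)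

/-- The solution `V` of the adjoint problem, for which `∫ Γ_λ(v) V` is a multiple of `v(t₀)`; here
`m = λ (t₁ - t₀)`, and `V` is scaled so that `∫ V = t₁ - t₀`. -/
noncomputable def dualPoly (K : ℕ → ℝ[X]) (m : ℝ) (r : ℕ) : ℝ[X] :=
  ∑ i ∈ Finset.range (r + 1), C ((-1) ^ i * ((2 * (i : ℝ) + 1) * dualCoeff m i)) * K i

lemma dualCoeff_pos {m : ℝ} (hm : 0 < m) : ∀ j, 0 < dualCoeff m j
  | 0 => by simp [dualCoeff]
  | 1 => by
    rw [dualCoeff]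
    positivity
  | j + 2 => by
    have hj := dualCoeff_pos hm j
    have hj' := dualCoeff_pos hm (j + 1)
    rw [dualCoeff]
    positivity

namespace IsLegendreBasis

variable {t₀ t₁ : ℝ} {K : ℕ → ℝ[X]}

lemma natDegree_dualPoly_le (hK : IsLegendreBasis t₀ t₁ K) (m : ℝ) (r : ℕ) :
    (dualPoly K m r).natDegree ≤ r := by
  refine natDegree_sum_le_of_forall_le _ _ fun i hi => (natDegree_C_mul_le _ _).trans ?_
  rw [hK.natDegree_eq]
  exact Nat.lt_succ_iff.mp (Finset.mem_range.mp hi)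

lemma eval_left_dualPoly (hK : IsLegendreBasis t₀ t₁ K) (m : ℝ) (r : ℕ) :
    (dualPoly K m r).eval t₀ =
      ∑ i ∈ Finset.range (r + 1), (2 * (i : ℝ) + 1) * dualCoeff m i := by
  rw [dualPoly, eval_finsetSum]
  refine Finset.sum_congr rfl fun i _ => ?_
  rw [eval_mul, eval_C, hK.eval_left, mul_right_comm, ← mul_pow, neg_one_mul, neg_neg, one_pow,
    one_mul]

lemma abs_eval_dualPoly_le (hK : IsLegendreBasis t₀ t₁ K) (ht : t₀ < t₁) {m : ℝ} (hm : 0 < m)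
    (r : ℕ) {t : ℝ} (hmem : t ∈ Set.Icc t₀ t₁) :
    |(dualPoly K m r).eval t| ≤ (dualPoly K m r).eval t₀ := by
  rw [hK.eval_left_dualPoly, dualPoly, eval_finsetSum]
  refine (Finset.abs_sum_le_sum_abs _ _).trans (Finset.sum_le_sum fun i _ => ?_)
  have hcoeff : 0 ≤ (2 * (i : ℝ) + 1) * dualCoeff m i :=
    mul_nonneg (by positivity) (dualCoeff_pos hm i).le
  rw [eval_mul, eval_C, abs_mul, abs_mul, abs_neg_one_pow, one_mul, abs_of_nonneg hcoeff]
  exact mul_le_of_le_one_right hcoeff (hK.abs_eval_le_one ht i hmem)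

lemma polyIntegral_dualPoly_mul (hK : IsLegendreBasis t₀ t₁ K) (m : ℝ) {r j : ℕ} (hj : j ≤ r) :
    polyIntegral t₀ t₁ (dualPoly K m r * K j) = (-1) ^ j * dualCoeff m j * (t₁ - t₀) := by
  rw [dualPoly, hK.polyIntegral_sum_mul _ (Nat.lt_succ_of_le hj)]
  field_simp

lemma polyIntegral_dualPoly_mul_derivative (hK : IsLegendreBasis t₀ t₁ K) (ht : t₀ < t₁) {m : ℝ}
    (hm : m ≠ 0) (r : ℕ) : ∀ j ≤ r, polyIntegral t₀ t₁ (dualPoly K m r * derivative (K j)) =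
      (-1) ^ j * m * (1 - dualCoeff m j)
  | 0, _ => by simp [hK.zero_eq_one, dualCoeff]
  | 1, _ => by
    have hk := (sub_pos.mpr ht).ne'
    have hone := hK.polyIntegral_dualPoly_mul m r.zero_le
    rw [hK.zero_eq_one, mul_one] at hone
    rw [hK.derivative_one ht, mul_comm, polyIntegral_C_mul, hone]
    simp only [dualCoeff]
    field_simp
    ring
  | j + 2, hj => by
    have hk := (sub_pos.mpr ht).ne'
    rw [hK.derivative_add_two ht, mul_add, map_add, mul_left_comm, polyIntegral_C_mul,
      hK.polyIntegral_dualPoly_mul_derivative ht hm r j (by lia),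
      hK.polyIntegral_dualPoly_mul m (by lia), dualCoeff]
    field_simp
    ring

lemma polyIntegral_dualPoly_mul_Gam (hK : IsLegendreBasis t₀ t₁ K) (ht : t₀ < t₁) {lam : ℝ}
    (hlam : lam ≠ 0) {r : ℕ} {v : ℝ[X]} (hv : v.natDegree ≤ r) :
    polyIntegral t₀ t₁ (dualPoly K (lam * (t₁ - t₀)) r * Gam t₀ t₁ r K lam v) =
      ((dualPoly K (lam * (t₁ - t₀)) r).eval t₀ + lam * (t₁ - t₀)) * v.eval t₀ := by
  set m := lam * (t₁ - t₀) with hm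
  have hm_ne : m ≠ 0 := mul_ne_zero hlam (sub_pos.mpr ht).ne'
  set V := dualPoly K m r
  have hadjoint : polyIntegral t₀ t₁ (V * (derivative v + lam • v)) = m * v.eval t₀ := by
    suffices h : (polyIntegral t₀ t₁ ∘ₗ LinearMap.mulLeft ℝ V ∘ₗ
        (derivative + lam • LinearMap.id)) v = (m • leval t₀) v by
      simpa only [LinearMap.comp_apply, LinearMap.mulLeft_apply, LinearMap.add_apply,
        LinearMap.smul_apply, LinearMap.id_apply, leval_apply, smul_eq_mul] using h
    refine hK.linearMap_ext fun j hj => ?_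
    simp only [LinearMap.comp_apply, LinearMap.mulLeft_apply, LinearMap.add_apply,
      LinearMap.smul_apply, LinearMap.id_apply, leval_apply, smul_eq_mul]
    rw [mul_add, map_add, mul_smul_comm, map_smul, smul_eq_mul,
      hK.polyIntegral_dualPoly_mul_derivative ht hm_ne r j (hj.trans hv),
      hK.polyIntegral_dualPoly_mul m (hj.trans hv), hK.eval_left, hm]
    ring
  have hlift : polyIntegral t₀ t₁ (V * Lop t₀ t₁ r K (v.eval t₀)) = v.eval t₀ * V.eval t₀ := by
    rw [mul_comm, hK.polyIntegral_Lop_mul ht _ (hK.natDegree_dualPoly_le m r)]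
  rw [Gam, add_right_comm, ← smul_eq_C_mul, mul_add, map_add, hadjoint, hlift]
  ring

lemma abs_eval_left_le_integral_abs_Gam (hK : IsLegendreBasis t₀ t₁ K) (ht : t₀ < t₁) {lam : ℝ}
    (hlam : 0 < lam) {r : ℕ} {v : ℝ[X]} (hv : v.natDegree ≤ r) :
    |v.eval t₀| ≤ ∫ s in t₀..t₁, |(Gam t₀ t₁ r K lam v).eval s| := by
  have hdual := hK.polyIntegral_dualPoly_mul_Gam ht hlam.ne' hv
  set w := Gam t₀ t₁ r K lam v
  set m := lam * (t₁ - t₀)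
  set V := dualPoly K m r
  have hm : 0 < m := mul_pos hlam (sub_pos.mpr ht)
  have hV_le : ∀ s ∈ Set.Icc t₀ t₁, |V.eval s| ≤ V.eval t₀ := fun s hs =>
    hK.abs_eval_dualPoly_le ht hm r hs
  have hV_pos : 0 < V.eval t₀ + m :=
    add_pos_of_nonneg_of_pos ((abs_nonneg _).trans (hV_le t₀ ⟨le_rfl, ht.le⟩)) hm
  have hw_nonneg : 0 ≤ ∫ s in t₀..t₁, |w.eval s| := integral_nonneg ht.le fun s _ => abs_nonneg _
  refine le_of_mul_le_mul_left ?_ hV_pos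
  calc (V.eval t₀ + m) * |v.eval t₀| = |polyIntegral t₀ t₁ (V * w)| := by
        rw [hdual, abs_mul, abs_of_pos hV_pos]
    _ ≤ V.eval t₀ * ∫ s in t₀..t₁, |w.eval s| := by
        simp only [polyIntegral_apply, eval_mul]
        exact abs_integral_mul_le_mul_integral_abs ht.le hV_le
          (w.continuous.intervalIntegrable t₀ t₁)
    _ ≤ (V.eval t₀ + m) * ∫ s in t₀..t₁, |w.eval s| := by
        gcongr
        exact le_add_of_nonneg_right hm.le

end IsLegendreBasis

section ErrorFunction

variable {t₀ t₁ lam : ℝ} {r : ℕ} {K : ℕ → ℝ[X]} {ψ : ℝ[X]}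

lemma Lop_eq_C_mul (t₀ t₁ : ℝ) (r : ℕ) (K : ℕ → ℝ[X]) (z : ℝ) :
    Lop t₀ t₁ r K z = C z * Lop t₀ t₁ r K 1 := by
  rw [Lop, Lop, ← mul_assoc, ← C_mul, mul_one_div]

lemma eq_zero_of_derivative_add_C_mul_eq_zero (hlam : lam ≠ 0) {p : ℝ[X]}
    (h : derivative p + C lam * p = 0) : p = 0 := by
  by_contra hp
  have hdeg := degree_derivative_lt hp
  rw [eq_neg_of_add_eq_zero_left h, degree_neg, degree_C_mul hlam] at hdeg
  exact lt_irrefl _ hdeg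

lemma errF_left (t₀ lam : ℝ) (ψ : ℝ[X]) : errF t₀ lam ψ t₀ = 1 - ψ.eval t₀ := by simp [errF]

lemma errF_left_ne_zero (hlam : lam ≠ 0) (hψ : Gam t₀ t₁ r K lam ψ = Lop t₀ t₁ r K 1) :
    errF t₀ lam ψ t₀ ≠ 0 := by
  intro h
  have hone : ψ.eval t₀ = 1 := by linarith [errF_left t₀ lam ψ]
  rw [Gam, hone] at hψ
  have hzero : ψ = 0 := eq_zero_of_derivative_add_C_mul_eq_zero hlam (by linear_combination hψ)
  simp [hzero] at hone

lemma hasDerivAt_errF (hψ : Gam t₀ t₁ r K lam ψ = Lop t₀ t₁ r K 1) (s : ℝ) :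
    HasDerivAt (errF t₀ lam ψ)
      (-errF t₀ lam ψ t₀ * (Lop t₀ t₁ r K 1).eval s - lam * errF t₀ lam ψ s) s := by
  have hexp := (((hasDerivAt_id s).sub_const t₀).const_mul (-lam)).exp
  refine (hexp.sub (ψ.hasDerivAt s)).congr_deriv ?_
  have hψs := congrArg (eval s) hψ
  rw [Gam, Lop_eq_C_mul] at hψs
  simp only [eval_add, eval_mul, eval_C] at hψs
  rw [errF_left, errF, id]
  linear_combination -hψs

lemma hasDerivAt_sub_errF (hlam : lam ≠ 0) (hψ : Gam t₀ t₁ r K lam ψ = Lop t₀ t₁ r K 1)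
    (v : ℝ[X]) (s : ℝ) :
    HasDerivAt (fun s => v.eval s - v.eval t₀ * (errF t₀ lam ψ s / errF t₀ lam ψ t₀))
      ((Gam t₀ t₁ r K lam v).eval s -
        lam * (v.eval s - v.eval t₀ * (errF t₀ lam ψ s / errF t₀ lam ψ t₀))) s := by
  have he := errF_left_ne_zero hlam hψ
  refine ((v.hasDerivAt s).sub
    (((hasDerivAt_errF hψ s).div_const _).const_mul (v.eval t₀))).congr_deriv ?_
  rw [Gam, Lop_eq_C_mul t₀ t₁ r K (v.eval t₀)]
  simp only [eval_add, eval_mul, eval_C]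
  field_simp
  ring

lemma abs_sub_errF_le_integral_abs_Gam (hlam : 0 < lam)
    (hψ : Gam t₀ t₁ r K lam ψ = Lop t₀ t₁ r K 1) (v : ℝ[X]) {t : ℝ} (ht : t ∈ Set.Icc t₀ t₁) :
    |v.eval t - v.eval t₀ * (errF t₀ lam ψ t / errF t₀ lam ψ t₀)| ≤
      ∫ s in t₀..t₁, |(Gam t₀ t₁ r K lam v).eval s| := by
  have hstable := abs_le_add_integral_abs_of_hasDerivAt hlam.le (Gam t₀ t₁ r K lam v).continuous
    (hasDerivAt_sub_errF hlam.ne' hψ v) ht.1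
  rw [div_self (errF_left_ne_zero hlam.ne' hψ), mul_one, sub_self, abs_zero, zero_add] at hstable
  exact hstable.trans (integral_mono_interval le_rfl ht.1 ht.2
    (Filter.Eventually.of_forall fun s => abs_nonneg _)
    ((Gam t₀ t₁ r K lam v).continuous.abs.intervalIntegrable t₀ t₁))

lemma abs_errF_div_le_biSup (t₀ lam : ℝ) (ψ : ℝ[X]) {a b t : ℝ} (ht : t ∈ Set.Ioc a b) :
    |errF t₀ lam ψ t / errF t₀ lam ψ t₀| ≤
      ⨆ s ∈ Set.Ioc a b, |errF t₀ lam ψ s / errF t₀ lam ψ t₀| := by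
  have hcont : Continuous fun s => |errF t₀ lam ψ s / errF t₀ lam ψ t₀| := by
    unfold errF
    fun_prop
  exact le_biSup_of_bddAbove_image ((isCompact_Icc.bddAbove_image hcont.continuousOn).mono
    (Set.image_mono Set.Ioc_subset_Icc_self)) ht

end ErrorFunction

/-- `L^∞`–`L¹` stability of `(Γ_λ)⁻¹`:
`sup_I |v| ≤ (sup_I |e/e(t₀)| + 1) ‖w‖_{L¹(I)}` whenever `Γ_λ(v) = w`. -/
theorem stmt_14 (t₀ t₁ : ℝ) (ht : t₀ < t₁) (r : ℕ) (K : ℕ → Polynomial ℝ)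
    (hK : IsLegendreBasis t₀ t₁ K) (lam : ℝ) (hlam : 0 < lam)
    (ψ : Polynomial ℝ) (hψdeg : ψ.natDegree ≤ r)
    (hψ : Gam t₀ t₁ r K lam ψ = Lop t₀ t₁ r K 1) :
    ∀ w v : Polynomial ℝ, w.natDegree ≤ r → v.natDegree ≤ r →
      Gam t₀ t₁ r K lam v = w →
      ∀ t ∈ Set.Ioc t₀ t₁,
        |v.eval t| ≤ ((⨆ s ∈ Set.Ioc t₀ t₁, |errF t₀ lam ψ s / errF t₀ lam ψ t₀|) + 1) *
          ∫ s in t₀..t₁, |w.eval s| := by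
  rintro w v - hv rfl t hmem
  have hv₀ := hK.abs_eval_left_le_integral_abs_Gam ht hlam hv
  have hrest := abs_sub_errF_le_integral_abs_Gam hlam hψ v (Set.Ioc_subset_Icc_self hmem)
  have hsup := abs_errF_div_le_biSup t₀ lam ψ hmem
  set ε := errF t₀ lam ψ t / errF t₀ lam ψ t₀
  set W := ∫ s in t₀..t₁, |(Gam t₀ t₁ r K lam v).eval s|
  have hW : 0 ≤ W := (abs_nonneg _).trans hv₀
  calc |v.eval t| = |v.eval t₀ * ε + (v.eval t - v.eval t₀ * ε)| := by rw [add_sub_cancel]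
    _ ≤ |v.eval t₀| * |ε| + |v.eval t - v.eval t₀ * ε| := by
      rw [← abs_mul]
      exact abs_add_le _ _
    _ ≤ W * |ε| + W := by gcongr
    _ = (|ε| + 1) * W := by ring
    _ ≤ _ := by gcongr
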